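/- arXiv:2412.13066 — 2 statements merged into one kernel-verified Lean document; each statement's English description precedes it below -/
import Mathlib

section
/- Let r,s ∈ (4/3,∞] with 1 < 2/r + 3/s < 3/2. Suppose there exists C > 0 such that for every ν > 0 and every u₀ ∈ L²_σ there exists a weak solution u^ν ∈ W_ν(u₀) with ‖u^ν‖_{L^∞(0,∞;L²)} + √ν ‖∇u^ν‖_{L²(0,∞;L²)} ≤ C ‖u₀‖_{L²} and ‖u^ν‖_{L^r(0,∞;L^s)} ≤ C ν^{−3(5/(3r)+2/s−1)} ‖u₀‖_{L²}^{2(2/r+3/s−1)}. Then 5/(3r) + 2/s ≥ 1. (This is the implication (ii) ⇒ (iii) of the main theorem in the case X = L^s(ℝ³;ℝ³), Z = L²_σ.) -/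
open MeasureTheory ENNReal Set Filter

noncomputable section

abbrev E3 : Type := EuclideanSpace ℝ (Fin 3)

/-- Spatial partial derivative of a scalar function in the `j`-th coordinate direction. -/
def pd (f : E3 → ℝ) (j : Fin 3) (x : E3) : ℝ :=
  fderiv ℝ f x (EuclideanSpace.single j 1)

/-- Divergence-free in the sense of distributions. -/
def IsDivFree (v : E3 → E3) : Prop :=
  ∀ φ : E3 → ℝ, ContDiff ℝ (⊤ : ℕ∞) φ → HasCompactSupport φ →
    ∫ x : E3, ∑ i, v x i * pd φ i x = 0

/-- The space-time measure on `(0,∞) × ℝ³`. -/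
def μST : Measure (ℝ × E3) := (volume.restrict (Ioi (0:ℝ))).prod volume

/-- Mixed norm `L^r(I; L^s)`. -/
def mixedNorm (r s : ℝ≥0∞) (I : Set ℝ) (u : ℝ → E3 → E3) : ℝ≥0∞ :=
  if r = ∞ then essSup (fun t => eLpNorm (u t) s volume) (volume.restrict I)
  else (∫⁻ t in I, (eLpNorm (u t) s volume) ^ r.toReal) ^ (1 / r.toReal)

/-- Squared spatial `L²` norm of the (matrix-valued) gradient at time `t`. -/
def gradSq (G : ℝ → E3 → Fin 3 → Fin 3 → ℝ) (t : ℝ) : ℝ≥0∞ :=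
  ∫⁻ x : E3, ∑ i, ∑ j, ENNReal.ofReal ((G t x i j) ^ 2)

/-- `L²((0,∞); L²)` norm of the gradient. -/
def gradL2 (G : ℝ → E3 → Fin 3 → Fin 3 → ℝ) : ℝ≥0∞ :=
  (∫⁻ t in Ioi (0:ℝ), gradSq G t) ^ (1/2 : ℝ)

/-- `G` is the distributional spatial gradient of `u` on `ℝ³ × (0,∞)`. -/
def IsDistGrad (u : ℝ → E3 → E3) (G : ℝ → E3 → Fin 3 → Fin 3 → ℝ) : Prop :=
  ∀ ψ : ℝ × E3 → ℝ, ContDiff ℝ (⊤ : ℕ∞) ψ → HasCompactSupport ψ →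
    tsupport ψ ⊆ {p | 0 < p.1} → ∀ i j,
    (∫ p, u p.1 p.2 i * pd (fun y => ψ (p.1, y)) j p.2 ∂μST)
      = - ∫ p, G p.1 p.2 i j * ψ p ∂μST

/-- Admissible space-time test function: smooth, compactly supported in `ℝ³ × [0,∞)`
and divergence-free. -/
def IsTest (φ : ℝ × E3 → E3) : Prop :=
  ContDiff ℝ (⊤ : ℕ∞) φ ∧ HasCompactSupport φ ∧
    ∀ p : ℝ × E3, ∑ i, pd (fun y => φ (p.1, y) i) i p.2 = 0

def timeDeriv (φ : ℝ × E3 → E3) (p : ℝ × E3) (i : Fin 3) : ℝ :=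
  deriv (fun τ => φ (τ, p.2) i) p.1

def spaceLap (φ : ℝ × E3 → E3) (p : ℝ × E3) (i : Fin 3) : ℝ :=
  ∑ j, pd (fun y => pd (fun z => φ (p.1, z) i) j y) j p.2

def spaceGrad (φ : ℝ × E3 → E3) (p : ℝ × E3) (i j : Fin 3) : ℝ :=
  pd (fun y => φ (p.1, y) i) j p.2

/-- Weak solution of the Navier–Stokes equations on `ℝ³ × (0,∞)` with viscosity `ν`,
datum `u₀` and distributional spatial gradient `G`. -/
def IsWeakNS (ν : ℝ) (u₀ : E3 → E3) (u : ℝ → E3 → E3)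
    (G : ℝ → E3 → Fin 3 → Fin 3 → ℝ) : Prop :=
  AEStronglyMeasurable (Function.uncurry u) μST ∧
  mixedNorm ∞ 2 (Ioi 0) u < ∞ ∧
  (∀ᵐ t ∂(volume.restrict (Ioi (0:ℝ))), IsDivFree (u t)) ∧
  AEStronglyMeasurable (Function.uncurry G) μST ∧
  (∫⁻ t in Ioi (0:ℝ), gradSq G t) < ∞ ∧
  IsDistGrad u G ∧
  ∀ φ : ℝ × E3 → E3, IsTest φ →
    (∫ p,
        ((∑ i, u p.1 p.2 i * (timeDeriv φ p i + ν * spaceLap φ p i)) +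
         ∑ i, ∑ j, u p.1 p.2 i * u p.1 p.2 j * spaceGrad φ p i j) ∂μST)
      = - ∫ x : E3, ∑ i, u₀ x i * φ (0, x) i

/-- Leray–Hopf solution: weak solution satisfying the energy inequality. -/
def IsLerayHopf (ν : ℝ) (u₀ : E3 → E3) (u : ℝ → E3 → E3)
    (G : ℝ → E3 → Fin 3 → Fin 3 → ℝ) : Prop :=
  IsWeakNS ν u₀ u G ∧
  ∀ᵐ t ∂(volume.restrict (Ioi (0:ℝ))),
    ENNReal.ofReal (1/2) * (eLpNorm (u t) 2 volume) ^ (2:ℕ)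
        + ENNReal.ofReal ν * ∫⁻ τ in Ioc (0:ℝ) t, gradSq G τ
      ≤ ENNReal.ofReal (1/2) * (eLpNorm u₀ 2 volume) ^ (2:ℕ)

/-- `L²_σ`: divergence-free fields in `L²(ℝ³;ℝ³)`, as a subset of `L²`. -/
def L2σ : Set (Lp E3 2 (volume : Measure E3)) := {v | IsDivFree ⇑v}

/-! Fix a datum `u₀`. If `5/(3r) + 2/s < 1`, the given solutions are bounded in `L^∞ L²` and tend to
zero in `L^r L^s` like a positive power of `ν` as `ν → 0`. Moreover `1 ≤ r` and `2 ≤ s`, so Hölder's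
inequality on the compact support of a test field `φ` bounds both the linear and the quadratic term
of the weak formulation by a multiple of `(1 + ‖u‖_{L^∞ L²}) ‖u‖_{L^r L^s}`. In the limit `u₀` is
orthogonal to `φ(0, ·)` for every divergence-free test field `φ`, which fails for a nonzero field
`u₀ = (∂₂f, -∂₁f, 0)` and `φ(t, x) = η(t) u₀(x)` with `η(0) = 1`. -/

section DirectionalDerivative

variable {E F : Type*} [NormedAddCommGroup E] [NormedSpace ℝ E]
  [NormedAddCommGroup F] [NormedSpace ℝ F]

theorem exists_fderiv_apply_ne_zero {f : E → F} (hf : Differentiable ℝ f)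
    (hc : HasCompactSupport f) (hf₀ : f ≠ 0) {w : E} (hw : w ≠ 0) :
    ∃ x, fderiv ℝ f x w ≠ 0 := by
  by_contra! hzero
  obtain ⟨x₀, hx₀⟩ := Function.ne_iff.1 hf₀
  have hderiv : ∀ t : ℝ, HasDerivAt (fun t : ℝ => f (x₀ + t • w)) 0 t := fun t => by
    have hline : HasDerivAt (fun t : ℝ => x₀ + t • w) w t := by
      simpa using ((hasDerivAt_id t).smul_const w).const_add x₀
    exact hzero (x₀ + t • w) ▸ (hf (x₀ + t • w)).hasFDerivAt.comp_hasDerivAt t hline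
  have hconst : (fun t : ℝ => f (x₀ + t • w)) = fun _ => f x₀ := funext fun t => by
    simpa using is_const_of_deriv_eq_zero (fun t => (hderiv t).differentiableAt)
      (fun t => (hderiv t).deriv) t 0
  have hline : Tendsto (fun t : ℝ => x₀ + t • w) (cocompact ℝ) (cocompact E) :=
    ((Homeomorph.addLeft x₀).isClosedEmbedding.comp
      (isClosedEmbedding_smul_left hw)).tendsto_cocompact
  have hlim : Tendsto (fun t : ℝ => f (x₀ + t • w)) (cocompact ℝ) (nhds 0) :=
    hc.is_zero_at_infty.comp hline
  rw [hconst] at hlim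
  exact hx₀ (tendsto_nhds_unique tendsto_const_nhds hlim)

end DirectionalDerivative

section PartialDerivative

variable {f : E3 → ℝ}

theorem contDiff_pd (hf : ContDiff ℝ (⊤ : ℕ∞) f) (j : Fin 3) : ContDiff ℝ (⊤ : ℕ∞) (pd f j) :=
  (hf.fderiv_right (m := (⊤ : ℕ∞)) (by simp)).clm_apply contDiff_const

theorem continuous_pd (hf : ContDiff ℝ 1 f) (j : Fin 3) : Continuous (pd f j) :=
  (hf.continuous_fderiv one_ne_zero).clm_apply continuous_const

theorem tsupport_pd_subset (f : E3 → ℝ) (j : Fin 3) : tsupport (pd f j) ⊆ tsupport f :=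
  tsupport_fderiv_apply_subset ℝ _

theorem pd_neg (f : E3 → ℝ) (j : Fin 3) : pd (-f) j = -pd f j := by
  funext x
  simp [pd, fderiv_neg]

theorem pd_comm (hf : ContDiff ℝ 2 f) (i j : Fin 3) : pd (pd f i) j = pd (pd f j) i := by
  have hd : Differentiable ℝ (fderiv ℝ f) :=
    (hf.fderiv_right (m := 1) (by norm_num)).differentiable one_ne_zero
  have pd_pd : ∀ (k l : Fin 3) (x : E3), pd (pd f k) l x =
      fderiv ℝ (fderiv ℝ f) x (EuclideanSpace.single l 1) (EuclideanSpace.single k 1) := by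
    intro k l x
    change fderiv ℝ (fun y => fderiv ℝ f y (EuclideanSpace.single k 1)) x _ = _
    rw [fderiv_clm_apply (hd x) (differentiableAt_const _)]
    simp
  funext x
  rw [pd_pd, pd_pd]
  exact hf.contDiffAt.isSymmSndFDerivAt (by simp) _ _

theorem integral_mul_pd {g : E3 → ℝ} (hf : ContDiff ℝ 1 f) (hg : ContDiff ℝ 1 g)
    (hc : HasCompactSupport g) (j : Fin 3) :
    ∫ x, f x * pd g j x = -∫ x, pd f j x * g x := by
  have hgc : HasCompactSupport (pd g j) :=
    hc.mono' ((subset_tsupport _).trans (tsupport_pd_subset g j))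
  exact integral_mul_fderiv_eq_neg_fderiv_mul_of_integrable
    (((continuous_pd hf j).mul hg.continuous).integrable_of_hasCompactSupport hc.mul_left)
    ((hf.continuous.mul (continuous_pd hg j)).integrable_of_hasCompactSupport hgc.mul_left)
    ((hf.continuous.mul hg.continuous).integrable_of_hasCompactSupport hc.mul_left)
    (fun x _ => hf.differentiable one_ne_zero x) (fun x _ => hg.differentiable one_ne_zero x)

end PartialDerivative

section Divergence

/-- The pointwise divergence of a vector field on `ℝ³`. -/
def divergence (v : E3 → E3) (x : E3) : ℝ :=
  ∑ i, pd (fun y => v y i) i x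

theorem isDivFree_of_divergence_eq_zero {v : E3 → E3} (hv : ContDiff ℝ 1 v)
    (hdiv : divergence v = 0) : IsDivFree v := by
  intro φ hφ hφc
  have hvi : ∀ i, ContDiff ℝ 1 (fun y => v y i) := contDiff_euclidean.1 hv
  have hφ₁ : ContDiff ℝ 1 φ := hφ.of_le (by simp)
  have hint : ∀ i, Integrable fun x => v x i * pd φ i x := fun i =>
    ((hvi i).continuous.mul (continuous_pd hφ₁ i)).integrable_of_hasCompactSupport
      (hφc.mono' ((subset_tsupport _).trans (tsupport_pd_subset φ i))).mul_left
  have hint' : ∀ i, Integrable fun x => pd (fun y => v y i) i x * φ x := fun i =>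
    ((continuous_pd (hvi i) i).mul hφ.continuous).integrable_of_hasCompactSupport hφc.mul_left
  calc ∫ x, ∑ i, v x i * pd φ i x
      = ∑ i, -∫ x, pd (fun y => v y i) i x * φ x := by
        rw [integral_finsetSum _ fun i _ => hint i]
        exact Finset.sum_congr rfl fun i _ => integral_mul_pd (hvi i) hφ₁ hφc i
    _ = -∫ x, divergence v x * φ x := by
        simp only [divergence, Finset.sum_mul]
        rw [Finset.sum_neg_distrib, integral_finsetSum _ fun i _ => hint' i]
    _ = 0 := by simp [hdiv]

/-- The field `(∂₂f, -∂₁f, 0)`, i.e. the curl of `(0, 0, f)`, where `∂₁, ∂₂` are `pd · 0, pd · 1`: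
a source of divergence-free fields with compact support. -/
def curlE₃ (f : E3 → ℝ) (x : E3) : E3 :=
  !₂[pd f 1 x, -pd f 0 x, 0]

variable {f : E3 → ℝ}

theorem contDiff_curlE₃ (hf : ContDiff ℝ (⊤ : ℕ∞) f) : ContDiff ℝ (⊤ : ℕ∞) (curlE₃ f) := by
  refine contDiff_euclidean.2 fun i => ?_
  fin_cases i
  · exact contDiff_pd hf 1
  · exact (contDiff_pd hf 0).neg
  · exact contDiff_const

theorem hasCompactSupport_curlE₃ (hc : HasCompactSupport f) : HasCompactSupport (curlE₃ f) := by
  refine HasCompactSupport.intro hc.isCompact fun x hx => ?_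
  have hpd : ∀ j, pd f j x = 0 := fun j =>
    image_eq_zero_of_notMem_tsupport fun h => hx (tsupport_pd_subset f j h)
  ext i
  fin_cases i <;> simp [curlE₃, hpd]

theorem divergence_curlE₃ (hf : ContDiff ℝ 2 f) : divergence (curlE₃ f) = 0 := by
  funext x
  have h₂ : pd (fun _ : E3 => (0 : ℝ)) 2 x = 0 := by simp [pd]
  rw [divergence, Fin.sum_univ_three]
  change pd (pd f 1) 0 x + pd (-pd f 0) 1 x + pd (fun _ : E3 => (0 : ℝ)) 2 x = 0
  rw [h₂, pd_neg, Pi.neg_apply, pd_comm hf 1 0]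
  ring

theorem curlE₃_ne_zero (hf : Differentiable ℝ f) (hc : HasCompactSupport f) (hf₀ : f ≠ 0) :
    curlE₃ f ≠ 0 := by
  obtain ⟨x, hx⟩ : ∃ x, pd f 1 x ≠ 0 :=
    exists_fderiv_apply_ne_zero hf hc hf₀ (by simp)
  exact fun h => hx (by simpa [curlE₃] using congrArg (fun w : E3 => w 0) (congrFun h x))

end Divergence

section SpaceTimeDerivative

/-- The partial derivative in the `j`-th space direction of a function on space-time. -/
def spacePd (f : ℝ × E3 → ℝ) (j : Fin 3) (p : ℝ × E3) : ℝ :=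
  pd (fun y => f (p.1, y)) j p.2

variable {f : ℝ × E3 → ℝ}

theorem spacePd_eq_fderiv (hf : Differentiable ℝ f) (j : Fin 3) :
    spacePd f j = fun p => fderiv ℝ f p (0, EuclideanSpace.single j 1) := by
  funext p
  have hslice : HasFDerivAt (fun y => f (p.1, y)) _ p.2 :=
    (hf p).hasFDerivAt.comp p.2 (hasFDerivAt_prodMk_right p.1 p.2)
  simp [spacePd, pd, hslice.fderiv]

theorem contDiff_spacePd (hf : ContDiff ℝ (⊤ : ℕ∞) f) (j : Fin 3) :
    ContDiff ℝ (⊤ : ℕ∞) (spacePd f j) := by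
  rw [spacePd_eq_fderiv (hf.differentiable (by simp))]
  exact (hf.fderiv_right (m := (⊤ : ℕ∞)) (by simp)).clm_apply contDiff_const

theorem tsupport_spacePd_subset (hf : Differentiable ℝ f) (j : Fin 3) :
    tsupport (spacePd f j) ⊆ tsupport f := by
  rw [spacePd_eq_fderiv hf]
  exact tsupport_fderiv_apply_subset ℝ _

theorem deriv_slice_eq_fderiv (hf : Differentiable ℝ f) (p : ℝ × E3) :
    deriv (fun τ => f (τ, p.2)) p.1 = fderiv ℝ f p (1, 0) := by
  have hslice : HasFDerivAt (fun τ => f (τ, p.2)) _ p.1 :=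
    (hf p).hasFDerivAt.comp p.1 (hasFDerivAt_prodMk_left p.1 p.2)
  simpa using hslice.hasDerivAt.deriv

variable {φ : ℝ × E3 → E3}

theorem tsupport_coord_subset (φ : ℝ × E3 → E3) (i : Fin 3) :
    tsupport (fun p => φ p i) ⊆ tsupport φ :=
  tsupport_comp_subset (g := fun w : E3 => w i) rfl φ

theorem continuous_timeDeriv (hφ : ContDiff ℝ 1 φ) : Continuous (timeDeriv φ) := by
  have hφi : ∀ i, ContDiff ℝ 1 (fun p => φ p i) := contDiff_euclidean.1 hφ
  refine continuous_pi fun i => ?_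
  rw [show (fun p => timeDeriv φ p i) = fun p => fderiv ℝ (fun q => φ q i) p (1, 0) from
    funext (deriv_slice_eq_fderiv ((hφi i).differentiable one_ne_zero))]
  exact ((hφi i).continuous_fderiv one_ne_zero).clm_apply continuous_const

theorem timeDeriv_eq_zero (hφ : Differentiable ℝ φ) {p : ℝ × E3} (hp : p ∉ tsupport φ) :
    timeDeriv φ p = 0 := by
  funext i
  rw [timeDeriv, deriv_slice_eq_fderiv (differentiable_euclidean.1 hφ i),
    fderiv_of_notMem_tsupport ℝ fun h => hp (tsupport_coord_subset φ i h)]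
  rfl

theorem continuous_spaceGrad (hφ : ContDiff ℝ (⊤ : ℕ∞) φ) : Continuous (spaceGrad φ) :=
  continuous_pi fun i => continuous_pi fun j =>
    (contDiff_spacePd (contDiff_euclidean.1 hφ i) j).continuous

theorem spaceGrad_eq_zero (hφ : Differentiable ℝ φ) {p : ℝ × E3} (hp : p ∉ tsupport φ) :
    spaceGrad φ p = 0 := by
  funext i j
  change spacePd (fun q => φ q i) j p = 0
  exact image_eq_zero_of_notMem_tsupport fun h => hp <| tsupport_coord_subset φ i <|
    tsupport_spacePd_subset (differentiable_euclidean.1 hφ i) j h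

theorem spaceLap_eq_sum_spacePd (φ : ℝ × E3 → E3) (p : ℝ × E3) (i : Fin 3) :
    spaceLap φ p i = ∑ j, spacePd (spacePd (fun q => φ q i) j) j p :=
  rfl

theorem continuous_spaceLap (hφ : ContDiff ℝ (⊤ : ℕ∞) φ) : Continuous (spaceLap φ) :=
  continuous_pi fun i => by
    simp only [spaceLap_eq_sum_spacePd]
    exact continuous_finsetSum _ fun j _ =>
      (contDiff_spacePd (contDiff_spacePd (contDiff_euclidean.1 hφ i) j) j).continuous

theorem spaceLap_eq_zero (hφ : ContDiff ℝ (⊤ : ℕ∞) φ) {p : ℝ × E3} (hp : p ∉ tsupport φ) :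
    spaceLap φ p = 0 := by
  funext i
  have hφi : ContDiff ℝ (⊤ : ℕ∞) (fun q => φ q i) := contDiff_euclidean.1 hφ i
  rw [spaceLap_eq_sum_spacePd]
  exact Finset.sum_eq_zero fun j _ => image_eq_zero_of_notMem_tsupport fun h => hp <|
    tsupport_coord_subset φ i <| tsupport_spacePd_subset (hφi.differentiable (by simp)) j <|
      tsupport_spacePd_subset ((contDiff_spacePd hφi j).differentiable (by simp)) j h

end SpaceTimeDerivative

section WeakIntegrand

/-- The integrand of the weak formulation in `IsWeakNS`, as a function of the value `w = u(p)`. -/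
def weakIntegrand (ν : ℝ) (φ : ℝ × E3 → E3) (p : ℝ × E3) (w : E3) : ℝ :=
  (∑ i, w i * (timeDeriv φ p i + ν * spaceLap φ p i)) + ∑ i, ∑ j, w i * w j * spaceGrad φ p i j

theorem enorm_weakIntegrand_le (ν : ℝ) (φ : ℝ × E3 → E3) (p : ℝ × E3) (w : E3) :
    ‖weakIntegrand ν φ p w‖ₑ ≤
      9 * (‖timeDeriv φ p‖ₑ + ‖spaceLap φ p‖ₑ + ‖spaceGrad φ p‖ₑ) * (1 + ‖ν‖ₑ) *
        (‖w‖ₑ + ‖w‖ₑ ^ 2) := by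
  have hw : ∀ i, ‖w i‖ₑ ≤ ‖w‖ₑ := fun i => enorm_le_iff_norm_le.2 (PiLp.norm_apply_le w i)
  have hcoord : ∀ {F : Type} [NormedAddCommGroup F] (a : Fin 3 → F) (i), ‖a i‖ₑ ≤ ‖a‖ₑ :=
    fun a i => enorm_le_iff_norm_le.2 (norm_le_pi_norm a i)
  have hlinear : ‖∑ i, w i * (timeDeriv φ p i + ν * spaceLap φ p i)‖ₑ ≤
      ∑ _i : Fin 3, ‖w‖ₑ * (‖timeDeriv φ p‖ₑ + ‖ν‖ₑ * ‖spaceLap φ p‖ₑ) := by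
    refine (enorm_sum_le _ _).trans (Finset.sum_le_sum fun i _ => ?_)
    rw [enorm_mul]
    refine mul_le_mul' (hw i) ((enorm_add_le _ _).trans ?_)
    rw [enorm_mul]
    gcongr <;> exact hcoord _ i
  have hquadratic : ‖∑ i, ∑ j, w i * w j * spaceGrad φ p i j‖ₑ ≤
      ∑ _i : Fin 3, ∑ _j : Fin 3, ‖w‖ₑ * ‖w‖ₑ * ‖spaceGrad φ p‖ₑ := by
    refine (enorm_sum_le _ _).trans (Finset.sum_le_sum fun i _ => ?_)
    refine (enorm_sum_le _ _).trans (Finset.sum_le_sum fun j _ => ?_)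
    rw [enorm_mul, enorm_mul]
    exact mul_le_mul' (mul_le_mul' (hw i) (hw j)) ((hcoord _ j).trans (hcoord _ i))
  refine (enorm_add_le _ _).trans ((add_le_add hlinear hquadratic).trans ?_)
  simp only [Finset.sum_const, Finset.card_univ, Fintype.card_fin, nsmul_eq_mul, Nat.cast_ofNat]
  generalize ‖timeDeriv φ p‖ₑ = a, ‖spaceLap φ p‖ₑ = b, ‖spaceGrad φ p‖ₑ = c, ‖ν‖ₑ = n, ‖w‖ₑ = y
  calc 3 * (y * (a + n * b)) + 3 * (3 * (y * y * c))
      ≤ 9 * (y * (a + n * b)) + 9 * (y * y * c) := by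
        rw [← mul_assoc 3 3, show (3 : ℝ≥0∞) * 3 = 9 by norm_num]
        gcongr
        norm_num
    _ ≤ 9 * (y * (a + n * b)) + 9 * (y * y * c) +
          9 * (y * (b + n * a + (1 + n) * c) + y ^ 2 * ((1 + n) * (a + b) + n * c)) :=
        le_self_add
    _ = 9 * (a + b + c) * (1 + n) * (y + y ^ 2) := by ring

theorem weakIntegrand_eq_zero {φ : ℝ × E3 → E3} (hφ : ContDiff ℝ (⊤ : ℕ∞) φ) (ν : ℝ)
    {p : ℝ × E3} (hp : p ∉ tsupport φ) (w : E3) : weakIntegrand ν φ p w = 0 := by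
  have hd : Differentiable ℝ φ := hφ.differentiable (by simp)
  simp [weakIntegrand, timeDeriv_eq_zero hd hp, spaceLap_eq_zero hφ hp, spaceGrad_eq_zero hd hp]

theorem exists_enorm_weakIntegrand_le {φ : ℝ × E3 → E3} (hφ : ContDiff ℝ (⊤ : ℕ∞) φ)
    (hc : HasCompactSupport φ) :
    ∃ M : NNReal, ∀ ν p w, ‖weakIntegrand ν φ p w‖ₑ ≤
      (tsupport φ).indicator (fun _ => M * (1 + ‖ν‖ₑ) * (‖w‖ₑ + ‖w‖ₑ ^ 2)) p := by
  have hcont : Continuous fun p => (timeDeriv φ p, spaceLap φ p, spaceGrad φ p) :=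
    (continuous_timeDeriv (hφ.of_le (by simp))).prodMk
      ((continuous_spaceLap hφ).prodMk (continuous_spaceGrad hφ))
  obtain ⟨C, hC⟩ := hc.isCompact.exists_bound_of_continuousOn hcont.continuousOn
  refine ⟨9 * (C.toNNReal + C.toNNReal + C.toNNReal), fun ν p w => ?_⟩
  by_cases hp : p ∈ tsupport φ
  · have hle : ∀ {F : Type} [NormedAddCommGroup F] {a : F},
        ‖a‖ ≤ ‖(timeDeriv φ p, spaceLap φ p, spaceGrad φ p)‖ → ‖a‖ₑ ≤ C.toNNReal := fun h =>
      enorm_le_coe.2 (NNReal.le_toNNReal_of_coe_le (h.trans (hC p hp)))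
    rw [indicator_of_mem hp]
    refine (enorm_weakIntegrand_le ν φ p w).trans ?_
    push_cast
    gcongr
    · exact hle (le_max_left _ _)
    · exact hle ((le_max_left _ _).trans (le_max_right _ _))
    · exact hle ((le_max_right _ _).trans (le_max_right _ _))
  · simp [weakIntegrand_eq_zero hφ ν hp w]

end WeakIntegrand

section IteratedNorm

variable {α β E : Type*} [MeasurableSpace α] [MeasurableSpace β] [NormedAddCommGroup E]
  {μ : Measure α} {ν : Measure β} {f : α → β → E}

theorem one_div_toReal_sub_nonneg {p q : ℝ≥0∞} (hp : p ≠ 0) (hpq : p ≤ q) :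
    0 ≤ 1 / p.toReal - 1 / q.toReal := by
  rcases eq_or_ne q ∞ with rfl | hq
  · simp
  · exact sub_nonneg.2 (one_div_le_one_div_of_le (toReal_pos hp (ne_top_of_le_ne_top hq hpq))
      (toReal_mono hq hpq))

theorem aemeasurable_eLpNorm_slice [SFinite ν] {p : ℝ≥0∞} (hp₀ : p ≠ 0) (hp : p ≠ ∞)
    (hf : AEStronglyMeasurable (Function.uncurry f) (μ.prod ν)) :
    AEMeasurable (fun a => eLpNorm (f a) p ν) μ := by
  simp only [eLpNorm_eq_lintegral_rpow_enorm_toReal hp₀ hp]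
  exact (AEMeasurable.lintegral_prod_right' (hf.enorm.pow_const p.toReal)).pow_const _

theorem lintegral_enorm_sq_eq (g : β → E) :
    ∫⁻ b, ‖g b‖ₑ ^ 2 ∂ν = eLpNorm g 2 ν * eLpNorm g 2 ν := by
  rw [← sq, eLpNorm_eq_lintegral_rpow_enorm_toReal two_ne_zero ofNat_ne_top,
    ← ENNReal.rpow_natCast, ← ENNReal.rpow_mul]
  simp

theorem lintegral_enorm_le_eLpNorm_two {g : β → E} (hg : AEStronglyMeasurable g ν) :
    ∫⁻ b, ‖g b‖ₑ ∂ν ≤ ν univ ^ (1 / 2 : ℝ) * eLpNorm g 2 ν := by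
  have h := eLpNorm_le_eLpNorm_mul_rpow_measure_univ one_le_two hg
  rw [eLpNorm_one_eq_lintegral_enorm, mul_comm] at h
  convert h using 2
  norm_num

theorem lintegral_enorm_add_sq_prod_le [SFinite μ] [SFinite ν]
    (hf : AEStronglyMeasurable (Function.uncurry f) (μ.prod ν)) :
    ∫⁻ q, (‖f q.1 q.2‖ₑ + ‖f q.1 q.2‖ₑ ^ 2) ∂(μ.prod ν) ≤
      (ν univ ^ (1 / 2 : ℝ) + eLpNorm (fun a => eLpNorm (f a) 2 ν) ∞ μ) *
        ∫⁻ a, eLpNorm (f a) 2 ν ∂μ := by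
  have hbound : ∀ᵐ a ∂μ, eLpNorm (f a) 2 ν ≤ eLpNorm (fun a => eLpNorm (f a) 2 ν) ∞ μ := by
    simpa using enorm_ae_le_eLpNormEssSup (fun a => eLpNorm (f a) 2 ν) μ
  have hmeas : AEMeasurable (fun q : α × β => ‖f q.1 q.2‖ₑ) (μ.prod ν) := hf.enorm
  rw [lintegral_prod (fun q => ‖f q.1 q.2‖ₑ + ‖f q.1 q.2‖ₑ ^ 2) (hmeas.add (hmeas.pow_const 2)),
    ← lintegral_const_mul'' _ (aemeasurable_eLpNorm_slice two_ne_zero ofNat_ne_top hf)]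
  refine lintegral_mono_ae ?_
  filter_upwards [hf.prodMk_left, hbound] with a (ha : AEStronglyMeasurable (f a) ν) hle
  calc ∫⁻ b, (‖f a b‖ₑ + ‖f a b‖ₑ ^ 2) ∂ν
      = ∫⁻ b, ‖f a b‖ₑ ∂ν + eLpNorm (f a) 2 ν * eLpNorm (f a) 2 ν := by
        rw [lintegral_add_left' ha.enorm, lintegral_enorm_sq_eq]
    _ ≤ ν univ ^ (1 / 2 : ℝ) * eLpNorm (f a) 2 ν +
          eLpNorm (fun a => eLpNorm (f a) 2 ν) ∞ μ * eLpNorm (f a) 2 ν := by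
        gcongr
        exact lintegral_enorm_le_eLpNorm_two ha
    _ = _ := (add_mul _ _ _).symm

theorem lintegral_eLpNorm_le_eLpNorm_eLpNorm [IsFiniteMeasure ν] {p r s : ℝ≥0∞} (hp₀ : p ≠ 0)
    (hp : p ≠ ∞) (hr : 1 ≤ r) (hs : p ≤ s)
    (hf : AEStronglyMeasurable (Function.uncurry f) (μ.prod ν)) :
    ∫⁻ a, eLpNorm (f a) p ν ∂μ ≤
      ν univ ^ (1 / p.toReal - 1 / s.toReal) * μ univ ^ (1 - 1 / r.toReal) *
        eLpNorm (fun a => eLpNorm (f a) s ν) r μ := by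
  set c := ν univ ^ (1 / p.toReal - 1 / s.toReal)
  have hctop : c ≠ ∞ :=
    rpow_ne_top_of_nonneg (one_div_toReal_sub_nonneg hp₀ hs) (measure_ne_top ν univ)
  have hspace : ∀ᵐ a ∂μ, eLpNorm (f a) p ν ≤ c.toNNReal * eLpNorm (f a) s ν := by
    filter_upwards [hf.prodMk_left] with a ha
    rw [coe_toNNReal hctop, mul_comm]
    exact eLpNorm_le_eLpNorm_mul_rpow_measure_univ hs ha
  have htime : ∫⁻ a, eLpNorm (f a) p ν ∂μ ≤
      eLpNorm (fun a => eLpNorm (f a) p ν) r μ * μ univ ^ (1 - 1 / r.toReal) := by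
    simpa [eLpNorm_one_eq_lintegral_enorm] using eLpNorm_le_eLpNorm_mul_rpow_measure_univ hr
      (aemeasurable_eLpNorm_slice hp₀ hp hf).aestronglyMeasurable
  have hscale : eLpNorm (fun a => eLpNorm (f a) p ν) r μ ≤
      c * eLpNorm (fun a => eLpNorm (f a) s ν) r μ := by
    simpa [ENNReal.smul_def, coe_toNNReal hctop] using
      eLpNorm_le_nnreal_smul_eLpNorm_of_ae_le_mul' (f := fun a => eLpNorm (f a) p ν)
        (g := fun a => eLpNorm (f a) s ν) hspace r
  calc ∫⁻ a, eLpNorm (f a) p ν ∂μ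
      ≤ c * eLpNorm (fun a => eLpNorm (f a) s ν) r μ * μ univ ^ (1 - 1 / r.toReal) :=
        htime.trans (by gcongr)
    _ = c * μ univ ^ (1 - 1 / r.toReal) * eLpNorm (fun a => eLpNorm (f a) s ν) r μ :=
        mul_right_comm _ _ _

end IteratedNorm

section MixedNorm

variable {r s : ℝ≥0∞}

theorem mixedNorm_eq_eLpNorm (hr : r ≠ 0) (s : ℝ≥0∞) (I : Set ℝ) (u : ℝ → E3 → E3) :
    mixedNorm r s I u = eLpNorm (fun t => eLpNorm (u t) s volume) r (volume.restrict I) := by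
  unfold mixedNorm
  split_ifs with h
  · rw [h, eLpNorm_exponent_top]
    rfl
  · rw [eLpNorm_eq_lintegral_rpow_enorm_toReal hr h]
    rfl

theorem eLpNorm_eLpNorm_restrict_le_mixedNorm (hr : r ≠ 0) (s : ℝ≥0∞) (I J : Set ℝ) (B : Set E3)
    (u : ℝ → E3 → E3) :
    eLpNorm (fun t => eLpNorm (u t) s (volume.restrict B)) r ((volume.restrict I).restrict J) ≤
      mixedNorm r s I u := by
  rw [mixedNorm_eq_eLpNorm hr]
  refine (eLpNorm_mono_measure _ Measure.restrict_le_self).trans (eLpNorm_mono_enorm fun t => ?_)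
  exact eLpNorm_mono_measure _ Measure.restrict_le_self

theorem setLIntegral_prod_enorm_add_sq_le (hr : 1 ≤ r) (hs : 2 ≤ s) {J : Set ℝ} {B : Set E3}
    (hB : volume B ≠ ∞) {u : ℝ → E3 → E3}
    (hu : AEStronglyMeasurable (Function.uncurry u) μST) :
    ∫⁻ p in J ×ˢ B, (‖u p.1 p.2‖ₑ + ‖u p.1 p.2‖ₑ ^ 2) ∂μST ≤
      (volume B ^ (1 / 2 : ℝ) + mixedNorm ∞ 2 (Ioi 0) u) *
        (volume B ^ (1 / (2 : ℝ≥0∞).toReal - 1 / s.toReal) *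
          volume.restrict (Ioi 0) J ^ (1 - 1 / r.toReal) * mixedNorm r s (Ioi 0) u) := by
  have hprod : μST.restrict (J ×ˢ B) =
      ((volume.restrict (Ioi 0)).restrict J).prod (volume.restrict B) :=
    (Measure.prod_restrict J B).symm
  have : IsFiniteMeasure ((volume : Measure E3).restrict B) := isFiniteMeasure_restrict.2 hB
  have hu' := hprod ▸ hu.restrict (s := J ×ˢ B)
  have hHolder := lintegral_eLpNorm_le_eLpNorm_eLpNorm two_ne_zero ofNat_ne_top hr hs hu'
  rw [hprod]
  refine (lintegral_enorm_add_sq_prod_le hu').trans ?_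
  simp only [Measure.restrict_apply_univ] at hHolder ⊢
  gcongr
  · exact eLpNorm_eLpNorm_restrict_le_mixedNorm top_ne_zero 2 (Ioi 0) J B u
  · refine hHolder.trans ?_
    gcongr
    exact eLpNorm_eLpNorm_restrict_le_mixedNorm (zero_lt_one.trans_le hr).ne' s (Ioi 0) J B u

theorem exists_setLIntegral_enorm_add_sq_le (hr : 1 ≤ r) (hs : 2 ≤ s) {K : Set (ℝ × E3)}
    (hK : IsCompact K) :
    ∃ c : NNReal, ∀ u : ℝ → E3 → E3, AEStronglyMeasurable (Function.uncurry u) μST →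
      ∫⁻ p in K, (‖u p.1 p.2‖ₑ + ‖u p.1 p.2‖ₑ ^ 2) ∂μST ≤
        c * (1 + mixedNorm ∞ 2 (Ioi 0) u) * mixedNorm r s (Ioi 0) u := by
  have hJ : volume.restrict (Ioi 0) (Prod.fst '' K) ≠ ∞ :=
    (hK.image continuous_fst).measure_lt_top.ne
  have hB : volume (Prod.snd '' K) ≠ ∞ := (hK.image continuous_snd).measure_lt_top.ne
  set b := volume (Prod.snd '' K) ^ (1 / 2 : ℝ)
  set d := volume (Prod.snd '' K) ^ (1 / (2 : ℝ≥0∞).toReal - 1 / s.toReal) *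
    volume.restrict (Ioi 0) (Prod.fst '' K) ^ (1 - 1 / r.toReal)
  have hb : b ≠ ∞ := rpow_ne_top_of_nonneg (by norm_num) hB
  have hd : d ≠ ∞ := mul_ne_top
    (rpow_ne_top_of_nonneg (one_div_toReal_sub_nonneg two_ne_zero hs) hB)
    (rpow_ne_top_of_nonneg (by simpa using one_div_toReal_sub_nonneg one_ne_zero hr) hJ)
  refine ⟨((b + 1) * d).toNNReal, fun u hu => ?_⟩
  set X := mixedNorm ∞ 2 (Ioi 0) u
  set Y := mixedNorm r s (Ioi 0) u
  calc ∫⁻ p in K, (‖u p.1 p.2‖ₑ + ‖u p.1 p.2‖ₑ ^ 2) ∂μST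
      ≤ ∫⁻ p in (Prod.fst '' K) ×ˢ (Prod.snd '' K), (‖u p.1 p.2‖ₑ + ‖u p.1 p.2‖ₑ ^ 2) ∂μST :=
        lintegral_mono_set subset_fst_image_prod_snd_image
    _ ≤ (b + X) * (d * Y) := setLIntegral_prod_enorm_add_sq_le hr hs hB hu
    _ ≤ (b + X) * (d * Y) + (1 + b * X) * (d * Y) := le_self_add
    _ = ((b + 1) * d).toNNReal * (1 + X) * Y := by
        rw [coe_toNNReal (mul_ne_top (add_ne_top.2 ⟨hb, one_ne_top⟩) hd)]
        ring

end MixedNorm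

section InviscidLimit

variable {r s : ℝ≥0∞} {φ : ℝ × E3 → E3}

theorem exists_enorm_integral_datum_mul_test_le (hr : 1 ≤ r) (hs : 2 ≤ s) (hφ : IsTest φ) :
    ∃ c : NNReal, ∀ ν u₀ u G, IsWeakNS ν u₀ u G →
      ‖∫ x, ∑ i, u₀ x i * φ (0, x) i‖ₑ ≤
        c * (1 + ‖ν‖ₑ) * (1 + mixedNorm ∞ 2 (Ioi 0) u) * mixedNorm r s (Ioi 0) u := by
  obtain ⟨hsmooth, hcompact, -⟩ := id hφ
  obtain ⟨M, hM⟩ := exists_enorm_weakIntegrand_le hsmooth hcompact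
  obtain ⟨c, hc⟩ := exists_setLIntegral_enorm_add_sq_le hr hs hcompact.isCompact
  refine ⟨M * c, fun ν u₀ u G ⟨hu, _, _, _, _, _, hweak⟩ => ?_⟩
  have hpair : ∫ p, weakIntegrand ν φ p (u p.1 p.2) ∂μST = -∫ x, ∑ i, u₀ x i * φ (0, x) i :=
    hweak φ hφ
  calc ‖∫ x, ∑ i, u₀ x i * φ (0, x) i‖ₑ
      = ‖∫ p, weakIntegrand ν φ p (u p.1 p.2) ∂μST‖ₑ := by rw [hpair, enorm_neg]
    _ ≤ ∫⁻ p, ‖weakIntegrand ν φ p (u p.1 p.2)‖ₑ ∂μST := enorm_integral_le_lintegral_enorm _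
    _ ≤ ∫⁻ p in tsupport φ, M * (1 + ‖ν‖ₑ) * (‖u p.1 p.2‖ₑ + ‖u p.1 p.2‖ₑ ^ 2) ∂μST := by
        rw [← lintegral_indicator (isClosed_tsupport φ).measurableSet]
        exact lintegral_mono fun p => hM ν p (u p.1 p.2)
    _ = M * (1 + ‖ν‖ₑ) * ∫⁻ p in tsupport φ, (‖u p.1 p.2‖ₑ + ‖u p.1 p.2‖ₑ ^ 2) ∂μST :=
        lintegral_const_mul' _ _ (by finiteness)
    _ ≤ M * (1 + ‖ν‖ₑ) * (c * (1 + mixedNorm ∞ 2 (Ioi 0) u) * mixedNorm r s (Ioi 0) u) := by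
        gcongr
        exact hc u hu
    _ = _ := by
        push_cast
        ring

theorem integral_datum_mul_test_eq_zero (hr : 1 ≤ r) (hs : 2 ≤ s) (hφ : IsTest φ)
    {u₀ : E3 → E3} {A B κ : ℝ} (hκ : 0 < κ)
    (h : ∃ᶠ ν in nhdsWithin 0 (Ioi 0), ∃ u G, IsWeakNS ν u₀ u G ∧
      mixedNorm ∞ 2 (Ioi 0) u ≤ ENNReal.ofReal A ∧
      mixedNorm r s (Ioi 0) u ≤ ENNReal.ofReal (B * ν ^ κ)) :
    ∫ x, ∑ i, u₀ x i * φ (0, x) i = 0 := by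
  obtain ⟨c, hc⟩ := exists_enorm_integral_datum_mul_test_le hr hs hφ
  have hpow : Tendsto (fun ν : ℝ => ENNReal.ofReal (B * ν ^ κ)) (nhds 0) (nhds 0) := by
    simpa [Real.zero_rpow hκ.ne'] using ENNReal.tendsto_ofReal
      ((Real.continuousAt_rpow_const 0 κ (Or.inr hκ.le)).tendsto.const_mul B)
  have hcoeff : Tendsto (fun ν : ℝ => (c : ℝ≥0∞) * (1 + ‖ν‖ₑ) * (1 + ENNReal.ofReal A)) (nhds 0)
      (nhds ((c : ℝ≥0∞) * (1 + ‖(0 : ℝ)‖ₑ) * (1 + ENNReal.ofReal A))) :=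
    ENNReal.Tendsto.mul_const (ENNReal.Tendsto.const_mul
      (tendsto_const_nhds.add (continuous_enorm.tendsto 0)) (Or.inr (by finiteness)))
      (Or.inr (by finiteness))
  have hlim : Tendsto (fun ν : ℝ => (c : ℝ≥0∞) * (1 + ‖ν‖ₑ) * (1 + ENNReal.ofReal A) *
      ENNReal.ofReal (B * ν ^ κ)) (nhdsWithin 0 (Ioi 0)) (nhds 0) := by
    simpa using (ENNReal.Tendsto.mul hcoeff (Or.inr zero_ne_top) hpow
      (Or.inr (by finiteness))).mono_left nhdsWithin_le_nhds
  refine enorm_eq_zero.1 (nonpos_iff_eq_zero.1 (ge_of_tendsto_of_frequently hlim (h.mono ?_)))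
  rintro ν ⟨u, G, hu, hA, hB⟩
  exact (hc ν u₀ u G hu).trans (by gcongr)

end InviscidLimit

section NontrivialDatum

variable {η : ℝ → ℝ} {v : E3 → E3}

theorem isTest_smul (hη : ContDiff ℝ (⊤ : ℕ∞) η) (hηc : HasCompactSupport η)
    (hv : ContDiff ℝ (⊤ : ℕ∞) v) (hvc : HasCompactSupport v) (hdiv : divergence v = 0) :
    IsTest fun p => η p.1 • v p.2 := by
  refine ⟨(hη.comp contDiff_fst).smul (hv.comp contDiff_snd), ?_, fun p => ?_⟩
  · refine HasCompactSupport.intro (hηc.isCompact.prod hvc.isCompact) fun p hp => ?_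
    rcases not_and_or.1 hp with hp | hp <;> simp [image_eq_zero_of_notMem_tsupport hp]
  · have hpd : ∀ i, pd (fun y => η p.1 * v y i) i p.2 = η p.1 * pd (fun y => v y i) i p.2 :=
      fun i => by
        have hvi : DifferentiableAt ℝ (fun y => v y i) p.2 :=
          (contDiff_euclidean.1 hv i).differentiable (by simp) _
        simp [pd, fderiv_const_mul hvi]
    simp only [PiLp.smul_apply, smul_eq_mul, hpd, ← Finset.mul_sum]
    exact mul_eq_zero_of_right _ (congrFun hdiv p.2)

theorem integral_sum_mul_self_pos (hv : Continuous v) (hvc : HasCompactSupport v) (hv₀ : v ≠ 0) :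
    0 < ∫ x, ∑ i, v x i * v x i := by
  have hsum : ∀ x, ∑ i, v x i * v x i = ‖v x‖ ^ 2 := fun x => by
    rw [EuclideanSpace.real_norm_sq_eq]
    simp only [sq]
  obtain ⟨x₀, hx₀⟩ := Function.ne_iff.1 hv₀
  simp only [hsum]
  refine (hv.norm.pow 2).integral_pos_of_hasCompactSupport_nonneg_nonzero (x := x₀) ?_
    (fun x => sq_nonneg _) (by simpa using hx₀)
  exact hvc.comp_left (g := fun w : E3 => ‖w‖ ^ 2) (by simp)

theorem exists_L2σ_ae_eq (hv : ContDiff ℝ 1 v) (hvc : HasCompactSupport v)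
    (hdiv : divergence v = 0) :
    ∃ u₀ : L2σ, ((u₀ : Lp E3 2 (volume : Measure E3)) : E3 → E3) =ᵐ[volume] v := by
  have hmem : MemLp v 2 volume := hv.continuous.memLp_of_hasCompactSupport hvc
  refine ⟨⟨hmem.toLp v, fun φ hφ hφc => ?_⟩, hmem.coeFn_toLp⟩
  rw [← isDivFree_of_divergence_eq_zero hv hdiv φ hφ hφc]
  refine integral_congr_ae ?_
  filter_upwards [hmem.coeFn_toLp] with x hx
  rw [hx]

theorem exists_L2σ_isTest_integral_ne_zero : ∃ (u₀ : L2σ) (φ : ℝ × E3 → E3), IsTest φ ∧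
    ∫ x, ∑ i, (u₀ : Lp E3 2 (volume : Measure E3)) x i * φ (0, x) i ≠ 0 := by
  let η : ContDiffBump (0 : ℝ) := default
  let f : ContDiffBump (0 : E3) := default
  have hη₀ : η 0 = 1 := η.one_of_mem_closedBall (Metric.mem_closedBall_self η.rIn_pos.le)
  have hf₀ : f 0 = 1 := f.one_of_mem_closedBall (Metric.mem_closedBall_self f.rIn_pos.le)
  have hv : ContDiff ℝ (⊤ : ℕ∞) (curlE₃ f) := contDiff_curlE₃ f.contDiff
  have hvc : HasCompactSupport (curlE₃ f) := hasCompactSupport_curlE₃ f.hasCompactSupport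
  have hdiv : divergence (curlE₃ f) = 0 := divergence_curlE₃ f.contDiff
  have hv₀ : curlE₃ f ≠ 0 := curlE₃_ne_zero (f.contDiff.differentiable one_ne_zero)
    f.hasCompactSupport (Function.ne_iff.2 ⟨0, by simp [hf₀]⟩)
  obtain ⟨u₀, hu₀⟩ := exists_L2σ_ae_eq (hv.of_le (by simp)) hvc hdiv
  refine ⟨u₀, _, isTest_smul η.contDiff η.hasCompactSupport hv hvc hdiv, ?_⟩
  convert (integral_sum_mul_self_pos hv.continuous hvc hv₀).ne' using 1
  refine integral_congr_ae ?_
  filter_upwards [hu₀] with x hx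
  simp [hx, hη₀]

end NontrivialDatum

theorem one_le_and_two_le_of_exponent_lt_one {r s : ℝ≥0∞} (h : 5 / (3 * r) + 2 / s < 1) :
    1 ≤ r ∧ 2 ≤ s := by
  have hr : 5 < 1 * (3 * r) :=
    (ENNReal.div_lt_iff (Or.inr (by simp)) (Or.inr (by simp))).1 (le_self_add.trans_lt h)
  have hs : 2 < 1 * s :=
    (ENNReal.div_lt_iff (Or.inr (by simp)) (Or.inr (by simp))).1 (le_add_self.trans_lt h)
  refine ⟨?_, by simpa using hs.le⟩
  by_contra! hr₁
  have : 3 * r ≤ 3 * 1 := by gcongr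
  exact absurd (hr.trans_le (by simpa using this)) (by norm_num)

theorem stmt_4_general (r s : ℝ≥0∞)
    (hyp : ∀ u₀ : L2σ, ∃ A B : ℝ, ∃ᶠ ν in nhdsWithin (0 : ℝ) (Ioi 0), ∃ u G,
      IsWeakNS ν ((u₀ : Lp E3 2 (volume : Measure E3)) : E3 → E3) u G ∧
      mixedNorm ∞ 2 (Ioi 0) u ≤ ENNReal.ofReal A ∧
      mixedNorm r s (Ioi 0) u
        ≤ ENNReal.ofReal (B * ν ^ (-(3 : ℝ) * ((5 / (3 * r) + 2 / s).toReal - 1)))) :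
    1 ≤ 5 / (3 * r) + 2 / s := by
  by_contra! hlt
  obtain ⟨hr, hs⟩ := one_le_and_two_le_of_exponent_lt_one hlt
  have hexp : 0 < -(3 : ℝ) * ((5 / (3 * r) + 2 / s).toReal - 1) := by
    have := ENNReal.toReal_strict_mono one_ne_top hlt
    rw [toReal_one] at this
    linarith
  obtain ⟨u₀, φ, hφ, hne⟩ := exists_L2σ_isTest_integral_ne_zero
  obtain ⟨A, B, hfreq⟩ := hyp u₀
  exact hne (integral_datum_mul_test_eq_zero hr hs hφ hexp hfreq)

/-- Implication (ii) ⇒ (iii) of the main theorem, for `X = L^s(ℝ³;ℝ³)`, `Z = L²_σ`: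
the a priori estimate forces `5/(3r) + 2/s ≥ 1`. -/
theorem stmt_4 (r s : ℝ≥0∞) (hr : 4/3 < r) (hs : 4/3 < s)
    (h1 : 1 < 2/r + 3/s) (h2 : 2/r + 3/s < 3/2)
    (hyp : ∃ C : ℝ, 0 < C ∧ ∀ ν : ℝ, 0 < ν → ∀ u₀ : L2σ, ∃ u G,
      IsWeakNS ν ((u₀ : Lp E3 2 (volume : Measure E3)) : E3 → E3) u G ∧
      mixedNorm ∞ 2 (Ioi 0) u + ENNReal.ofReal (Real.sqrt ν) * gradL2 G
        ≤ ENNReal.ofReal (C * ‖(u₀ : Lp E3 2 (volume : Measure E3))‖) ∧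
      mixedNorm r s (Ioi 0) u
        ≤ ENNReal.ofReal (C * ν ^ (-(3:ℝ) * ((5/(3*r) + 2/s).toReal - 1)) *
            ‖(u₀ : Lp E3 2 (volume : Measure E3))‖ ^ ((2:ℝ) * ((2/r + 3/s).toReal - 1)))) :
    1 ≤ 5/(3*r) + 2/s := by
  obtain ⟨C, -, hC⟩ := hyp
  refine stmt_4_general r s fun u₀ => ⟨C * ‖u₀.1‖, C * ‖u₀.1‖ ^ (2 * ((2 / r + 3 / s).toReal - 1)),
    Eventually.frequently ?_⟩
  filter_upwards [self_mem_nhdsWithin] with ν hν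
  obtain ⟨u, G, hu, hA, hB⟩ := hC ν hν u₀
  exact ⟨u, G, hu, le_self_add.trans hA, by rwa [mul_right_comm] at hB⟩
end
end

section
/- Let d ≥ 1 and let r,s ∈ [1,∞] satisfy 2/r + d/s < d/2. For v ∈ L²(ℝ^d) and t > 0 let (e^{tΔ}v)(x) := ∫_{ℝ^d} (4πt)^{−d/2} e^{−|x−y|²/(4t)} v(y) dy denote convolution with the Gaussian heat kernel. Then the set { v ∈ L²(ℝ^d) : ‖ t ↦ ‖e^{tΔ}v‖_{L^s(ℝ^d)} ‖_{L^r(0,∞)} < ∞ } is meagre in L²(ℝ^d). -/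
open MeasureTheory Set ENNReal

noncomputable section

/-- Convolution with the Gaussian heat kernel at time `t` in dimension `d`. -/
def heat (d : ℕ) (t : ℝ) (v : EuclideanSpace ℝ (Fin d) → ℝ)
    (x : EuclideanSpace ℝ (Fin d)) : ℝ :=
  ∫ y : EuclideanSpace ℝ (Fin d),
    (4 * Real.pi * t) ^ (-(d : ℝ) / 2) * Real.exp (-‖x - y‖ ^ 2 / (4 * t)) * v y

/-- Mixed `L^r((0,∞); L^s)` norm of a time-dependent scalar field. -/
def mixedNormH (d : ℕ) (r s : ℝ≥0∞) (w : ℝ → EuclideanSpace ℝ (Fin d) → ℝ) : ℝ≥0∞ :=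
  if r = ∞ then essSup (fun t => eLpNorm (w t) s volume) (volume.restrict (Ioi 0))
  else (∫⁻ t in Ioi (0:ℝ), (eLpNorm (w t) s volume) ^ r.toReal) ^ (1 / r.toReal)

/-!
By the semigroup law `e^{2τΔ} = e^{(2τ-t)Δ} e^{tΔ}` for `0 < t ≤ τ` and the smoothing estimate
`|e^{tΔ}w| ≤ (4πt)^{-d/(2s)} ‖w‖_s`, a finite mixed norm of `e^{tΔ}v` forces
`|(e^{2τΔ}v)(0)| = O(τ^{-(1/r + d/(2s))})` uniformly in `τ > 0`. On `L^p`, however, testing on the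
heat kernel itself shows that the functional `v ↦ (e^{2τΔ}v)(0)` has norm at least a multiple of
`τ^{-d/(2p)}`, which is larger as `τ → 0` when `1/r + d/(2s) < d/(2p)`. The functionals rescaled by
`τ^{1/r + d/(2s)}` are thus unbounded, and by the uniform boundedness principle in its Baire
category form they are pointwise bounded only on a meagre set.
-/

open Filter Topology Module
open scoped Convolution

section UniformBoundedness

variable {ι 𝕜 E F : Type*} [NontriviallyNormedField 𝕜] [NormedAddCommGroup E] [NormedSpace 𝕜 E]
  [NormedAddCommGroup F] [NormedSpace 𝕜 F]

theorem bddAbove_range_opNorm_of_mem_nhds {φ : ι → E →L[𝕜] F} {C : ℝ} {v₀ : E}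
    (h : {v | ∀ i, ‖φ i v‖ ≤ C} ∈ 𝓝 v₀) : BddAbove (range fun i => ‖φ i‖) := by
  obtain ⟨ε, hε, hball⟩ := Metric.mem_nhds_iff.1 h
  obtain ⟨c, hc⟩ := NormedField.exists_one_lt_norm 𝕜
  have hC (i : ι) : 0 ≤ C := (norm_nonneg _).trans (mem_of_mem_nhds h i)
  refine ⟨2 * C / (ε / ‖c‖), forall_mem_range.2 fun i => (φ i).opNorm_le_of_shell hε
    (div_nonneg (by linarith [hC i]) (by positivity)) hc fun x hx hxε => ?_⟩
  calc ‖φ i x‖ = ‖φ i (v₀ + x) - φ i v₀‖ := by simp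
    _ ≤ C + C := (norm_sub_le _ _).trans
      (add_le_add (hball (by simpa using hxε) i) (mem_of_mem_nhds h i))
    _ = 2 * C / (ε / ‖c‖) * (ε / ‖c‖) := by
      rw [div_mul_cancel₀ _ (div_pos hε (one_pos.trans hc)).ne', two_mul]
    _ ≤ 2 * C / (ε / ‖c‖) * ‖x‖ := by
      have := hC i
      gcongr

theorem isMeagre_setOf_bddAbove_norm_apply {φ : ι → E →L[𝕜] F}
    (hφ : ¬BddAbove (range fun i => ‖φ i‖)) :
    IsMeagre {v | BddAbove (range fun i => ‖φ i v‖)} := by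
  have hsub : {v | BddAbove (range fun i => ‖φ i v‖)} ⊆ ⋃ N : ℕ, {v | ∀ i, ‖φ i v‖ ≤ N} := by
    rintro v ⟨M, hM⟩
    obtain ⟨N, hN⟩ := exists_nat_ge M
    exact mem_iUnion.2 ⟨N, fun i => (hM (mem_range_self i)).trans hN⟩
  refine (isMeagre_iUnion fun N : ℕ => IsNowhereDense.isMeagre ?_).mono hsub
  have hclosed : IsClosed {v | ∀ i, ‖φ i v‖ ≤ N} := by
    simp only [ofPred_forall]
    exact isClosed_iInter fun i => isClosed_le (by fun_prop) continuous_const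
  rw [hclosed.isNowhereDense_iff, eq_empty_iff_forall_notMem]
  exact fun v₀ hv₀ => hφ (bddAbove_range_opNorm_of_mem_nhds (mem_interior_iff_mem_nhds.1 hv₀))

end UniformBoundedness

section Lp

variable {α : Type*} [MeasurableSpace α] {μ : Measure α} {p q : ℝ≥0∞}

theorem mul_measure_rpow_le_eLpNorm {ε : Type*} [TopologicalSpace ε] [ESeminormedAddMonoid ε]
    {f : α → ε} {c : ℝ≥0∞} {s : Set α} (hp : p ≠ 0) (hs : MeasurableSet s) (hμs : μ s ≠ 0)
    (h : ∀ x ∈ s, c ≤ ‖f x‖ₑ) : c * μ s ^ p⁻¹.toReal ≤ eLpNorm f p μ := by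
  have hμ : μ.restrict s ≠ 0 := by simpa using hμs
  calc c * μ s ^ p⁻¹.toReal = eLpNorm (fun _ => c) p (μ.restrict s) := by
        simp [eLpNorm_const c hp hμ, ENNReal.toReal_inv]
    _ ≤ eLpNorm f p (μ.restrict s) :=
      eLpNorm_mono_enorm_ae ((ae_restrict_mem hs).mono fun x hx => by simpa using h x hx)
    _ ≤ eLpNorm f p μ := eLpNorm_mono_measure f Measure.restrict_le_self

theorem toReal_inv_add_toReal_inv_eq_one (p q : ℝ≥0∞) [p.HolderConjugate q] :
    p⁻¹.toReal + q⁻¹.toReal = 1 := by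
  have hp : p⁻¹ ≠ ∞ := ENNReal.inv_ne_top.2 (HolderConjugate.ne_zero p q)
  have hq : q⁻¹ ≠ ∞ := ENNReal.inv_ne_top.2 (HolderConjugate.ne_zero q p)
  rw [← ENNReal.toReal_add hp hq, HolderConjugate.inv_add_inv_eq_one, ENNReal.toReal_one]

theorem eLpNorm_le_eLpNorm_top_rpow_mul_eLpNorm_one_rpow {F : Type*} [NormedAddCommGroup F]
    {f : α → F} [p.HolderConjugate q] (hf : AEStronglyMeasurable f μ) :
    eLpNorm f p μ ≤ eLpNorm f ∞ μ ^ q⁻¹.toReal * eLpNorm f 1 μ ^ p⁻¹.toReal := by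
  have hpq := toReal_inv_add_toReal_inv_eq_one p q
  obtain rfl | hp := eq_or_ne p ∞
  · simp_all
  have hp₀ : 0 < p.toReal := ENNReal.toReal_pos (HolderConjugate.ne_zero p q) hp
  have hexp : q⁻¹.toReal * p.toReal + 1 = p.toReal := by
    rw [← eq_sub_iff_add_eq'] at hpq
    rw [hpq, ENNReal.toReal_inv]
    field_simp
    ring
  have hpointwise : ∀ᵐ x ∂μ, ‖f x‖ₑ ^ p.toReal ≤
      eLpNorm f ∞ μ ^ (q⁻¹.toReal * p.toReal) * ‖f x‖ₑ := by
    filter_upwards [enorm_ae_le_eLpNormEssSup f μ] with x hx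
    nth_rw 1 [← hexp]
    rw [ENNReal.rpow_add_of_nonneg _ _ (by positivity) zero_le_one, ENNReal.rpow_one,
      eLpNorm_exponent_top]
    gcongr
  rw [eLpNorm_eq_lintegral_rpow_enorm_toReal (HolderConjugate.ne_zero p q) hp, one_div,
    ENNReal.rpow_inv_le_iff hp₀, ENNReal.mul_rpow_of_nonneg _ _ hp₀.le, ← ENNReal.rpow_mul,
    ENNReal.toReal_inv p, ENNReal.rpow_inv_rpow hp₀.ne', eLpNorm_one_eq_lintegral_enorm,
    ← lintegral_const_mul'' _ hf.enorm]
  exact lintegral_mono_ae hpointwise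

end Lp

section Convolution

variable {G F : Type*} [AddGroup G] [MeasureSpace G] [MeasurableAdd₂ G] [MeasurableNeg G]
  [NormedAddCommGroup F] [NormedSpace ℝ F] {f g : G → ℝ} {k : G → F}

theorem aestronglyMeasurable_convolution [SFinite (volume : Measure G)]
    [(volume : Measure G).IsAddRightInvariant] (hf : AEStronglyMeasurable f)
    (hk : AEStronglyMeasurable k) : AEStronglyMeasurable (f ⋆ k) :=
  (hf.convolution_integrand (ContinuousLinearMap.lsmul ℝ ℝ) hk).integral_prod_right'

variable [(volume : Measure G).IsAddLeftInvariant] [(volume : Measure G).IsNegInvariant]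
  {p q : ℝ≥0∞} [p.HolderConjugate q]

theorem convolutionExistsAt_of_memLp (hf : MemLp f p) (hk : MemLp k q) (x : G) :
    ConvolutionExistsAt f k x (ContinuousLinearMap.lsmul ℝ ℝ) volume :=
  memLp_one_iff_integrable.1
    ((hk.comp_measurePreserving (Measure.measurePreserving_sub_left volume x)).smul hf)

theorem enorm_convolution_le_eLpNorm_mul_eLpNorm (hf : AEStronglyMeasurable f)
    (hk : AEStronglyMeasurable k) (x : G) :
    ‖(f ⋆ k) x‖ₑ ≤ eLpNorm f p volume * eLpNorm k q volume := by
  have hx := Measure.measurePreserving_sub_left (volume : Measure G) x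
  calc ‖(f ⋆ k) x‖ₑ ≤ eLpNorm (f • (k ∘ fun y => x - y)) 1 volume := by
        rw [eLpNorm_one_eq_lintegral_enorm]
        exact enorm_integral_le_lintegral_enorm _
    _ ≤ eLpNorm f p volume * eLpNorm (k ∘ fun y => x - y) q volume :=
      eLpNorm_smul_le_mul_eLpNorm (hk.comp_measurePreserving hx) hf
    _ = eLpNorm f p volume * eLpNorm k q volume := by rw [eLpNorm_comp_measurePreserving hk hx]

variable [SFinite (volume : Measure G)] [(volume : Measure G).IsAddRightInvariant]

theorem memLp_top_convolution (hf : MemLp f p) (hk : MemLp k q) : MemLp (f ⋆ k) ∞ :=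
  ⟨aestronglyMeasurable_convolution hf.1 hk.1,
    (eLpNormEssSup_le_of_ae_enorm_bound (ae_of_all _
      (enorm_convolution_le_eLpNorm_mul_eLpNorm hf.1 hk.1))).trans_lt
      (ENNReal.mul_lt_top hf.2 hk.2)⟩

theorem convolution_assoc_of_memLp [CompleteSpace F] (hf : MemLp f 1) (hg : MemLp g 1)
    (hgp : MemLp g p) (hk : MemLp k q) (x : G) : ((f ⋆ g) ⋆ k) x = (f ⋆ (g ⋆ k)) x :=
  convolution_assoc _ _ _ _ (fun a b c => smul_assoc a b c) hf.1 hg.1 hk.1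
    ((memLp_one_iff_integrable.1 hf).ae_convolution_exists _ (memLp_one_iff_integrable.1 hg))
    (ae_of_all _ (convolutionExistsAt_of_memLp hgp.norm hk.norm))
    (convolutionExistsAt_of_memLp hf.norm (memLp_top_convolution hgp.norm hk.norm) x)

end Convolution

/-- The Gaussian heat kernel `(4πt)^(-n/2) exp(-|x|²/4t)` on an `n`-dimensional Euclidean space, so
that `heatKernel t ⋆ v` is the solution `e^{tΔ}v` of the heat equation. -/
def heatKernel {V : Type*} [NormedAddCommGroup V] [InnerProductSpace ℝ V] (t : ℝ) (x : V) : ℝ :=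
  (4 * Real.pi * t) ^ (-(finrank ℝ V : ℝ) / 2) * Real.exp (-‖x‖ ^ 2 / (4 * t))

section heatKernel

variable {V : Type*} [NormedAddCommGroup V] [InnerProductSpace ℝ V] {a b t : ℝ}

theorem heatKernel_nonneg (ht : 0 < t) (x : V) : 0 ≤ heatKernel t x := by
  unfold heatKernel
  positivity

theorem heatKernel_zero_right (t : ℝ) :
    heatKernel t (0 : V) = (4 * Real.pi * t) ^ (-(finrank ℝ V : ℝ) / 2) := by
  simp [heatKernel]

theorem heatKernel_neg (t : ℝ) (x : V) : heatKernel t (-x) = heatKernel t x := by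
  simp [heatKernel]

theorem heatKernel_le_heatKernel_zero (ht : 0 < t) (x : V) :
    heatKernel t x ≤ heatKernel t (0 : V) := by
  rw [heatKernel_zero_right]
  refine mul_le_of_le_one_right (by positivity) (Real.exp_le_one_iff.2 ?_)
  exact div_nonpos_of_nonpos_of_nonneg (by simp) (by positivity)

theorem continuous_heatKernel (t : ℝ) : Continuous (heatKernel t : V → ℝ) := by
  unfold heatKernel
  fun_prop

theorem heatKernel_mul_heatKernel_sub (ha : 0 < a) (hb : 0 < b) (x y : V) :
    heatKernel a y * heatKernel b (x - y) =
      heatKernel (a + b) x * heatKernel (a * b / (a + b)) (y - (a / (a + b)) • x) := by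
  have hconst : 4 * Real.pi * a * (4 * Real.pi * b) =
      4 * Real.pi * (a + b) * (4 * Real.pi * (a * b / (a + b))) := by
    field_simp
  have hsquare : -‖y‖ ^ 2 / (4 * a) + -‖x - y‖ ^ 2 / (4 * b) =
      -‖x‖ ^ 2 / (4 * (a + b)) + -‖y - (a / (a + b)) • x‖ ^ 2 / (4 * (a * b / (a + b))) := by
    rw [norm_sub_sq_real, norm_sub_sq_real, norm_smul, inner_smul_right, mul_pow, Real.norm_eq_abs,
      sq_abs, real_inner_comm]
    field_simp
    ring
  unfold heatKernel
  rw [mul_mul_mul_comm, ← Real.mul_rpow (by positivity) (by positivity), ← Real.exp_add, hconst,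
    hsquare, Real.mul_rpow (by positivity) (by positivity), Real.exp_add, mul_mul_mul_comm]

variable [FiniteDimensional ℝ V] [MeasurableSpace V] [BorelSpace V]

theorem integral_heatKernel (ht : 0 < t) : ∫ x : V, heatKernel t x = 1 := by
  have h := GaussianFourier.integral_rexp_neg_mul_sq_norm (V := V)
    (b := 1 / (4 * t)) (by positivity)
  have hexponent (x : V) : -‖x‖ ^ 2 / (4 * t) = -(1 / (4 * t)) * ‖x‖ ^ 2 := by ring
  simp_rw [heatKernel, hexponent]
  rw [integral_const_mul, h, neg_div, Real.rpow_neg (by positivity), div_div_eq_mul_div,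
    div_one, ← mul_assoc, mul_comm Real.pi]
  exact inv_mul_cancel₀ (by positivity)

theorem integrable_heatKernel (ht : 0 < t) : Integrable (heatKernel t : V → ℝ) :=
  Integrable.of_integral_ne_zero (by simp [integral_heatKernel ht])

theorem eLpNorm_heatKernel_one (ht : 0 < t) : eLpNorm (heatKernel t : V → ℝ) 1 volume = 1 := by
  simp_rw [eLpNorm_one_eq_lintegral_enorm, Real.enorm_of_nonneg (heatKernel_nonneg ht _)]
  rw [← ofReal_integral_eq_lintegral_ofReal (integrable_heatKernel ht)
    (ae_of_all _ (heatKernel_nonneg ht)), integral_heatKernel ht, ENNReal.ofReal_one]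

theorem eLpNorm_heatKernel_le (ht : 0 < t) (p q : ℝ≥0∞) [p.HolderConjugate q] :
    eLpNorm (heatKernel t : V → ℝ) p volume ≤
      ENNReal.ofReal ((4 * Real.pi * t) ^ (-(finrank ℝ V / 2 * q⁻¹.toReal))) := by
  have htop : eLpNorm (heatKernel t : V → ℝ) ∞ volume ≤
      ENNReal.ofReal ((4 * Real.pi * t) ^ (-(finrank ℝ V : ℝ) / 2)) := by
    refine eLpNormEssSup_le_of_ae_enorm_bound (ae_of_all _ fun x => ?_)
    rw [Real.enorm_of_nonneg (heatKernel_nonneg ht x), ← heatKernel_zero_right]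
    exact ENNReal.ofReal_le_ofReal (heatKernel_le_heatKernel_zero ht x)
  calc eLpNorm (heatKernel t : V → ℝ) p volume
      ≤ eLpNorm (heatKernel t : V → ℝ) ∞ volume ^ q⁻¹.toReal := by
        simpa [eLpNorm_heatKernel_one ht] using eLpNorm_le_eLpNorm_top_rpow_mul_eLpNorm_one_rpow
          (μ := volume) (p := p) (q := q) (continuous_heatKernel (V := V) t).aestronglyMeasurable
    _ ≤ ENNReal.ofReal ((4 * Real.pi * t) ^ (-(finrank ℝ V : ℝ) / 2)) ^ q⁻¹.toReal :=
      ENNReal.rpow_le_rpow htop ENNReal.toReal_nonneg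
    _ = ENNReal.ofReal ((4 * Real.pi * t) ^ (-(finrank ℝ V / 2 * q⁻¹.toReal))) := by
      rw [ENNReal.ofReal_rpow_of_pos (by positivity), ← Real.rpow_mul (by positivity)]
      ring_nf

theorem memLp_heatKernel {p : ℝ≥0∞} (ht : 0 < t) (hp : 1 ≤ p) : MemLp (heatKernel t : V → ℝ) p :=
  have := HolderConjugate.inv_one_sub_inv' hp
  ⟨(continuous_heatKernel t).aestronglyMeasurable,
    (eLpNorm_heatKernel_le ht p (1 - p⁻¹)⁻¹).trans_lt ENNReal.ofReal_lt_top⟩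

theorem heatKernel_convolution_heatKernel (ha : 0 < a) (hb : 0 < b) :
    (heatKernel a : V → ℝ) ⋆ heatKernel b = heatKernel (a + b) := by
  ext x
  simp_rw [convolution_lsmul, smul_eq_mul, heatKernel_mul_heatKernel_sub ha hb]
  rw [integral_const_mul, integral_sub_right_eq_self, integral_heatKernel (by positivity), mul_one]

variable {F : Type*} [NormedAddCommGroup F] [NormedSpace ℝ F] {p : ℝ≥0∞} {v : V → F}

theorem heatKernel_add_convolution [CompleteSpace F] (ha : 0 < a) (hb : 0 < b) (hp : 1 ≤ p)
    (hv : MemLp v p) (x : V) :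
    (heatKernel (a + b) ⋆ v) x = (heatKernel a ⋆ (heatKernel b ⋆ v)) x := by
  have := HolderConjugate.inv_one_sub_inv' hp
  rw [← heatKernel_convolution_heatKernel ha hb]
  exact convolution_assoc_of_memLp (p := (1 - p⁻¹)⁻¹) (q := p)
    (memLp_heatKernel ha le_rfl) (memLp_heatKernel hb le_rfl)
    (memLp_heatKernel hb (HolderConjugate.one_le _ p)) hv x

theorem ofReal_rpow_mul_enorm_heatKernel_convolution_le (ht : 0 < t) (hp : 1 ≤ p)
    (hv : AEStronglyMeasurable v) (x : V) :
    ENNReal.ofReal ((4 * Real.pi * t) ^ (finrank ℝ V / 2 * p⁻¹.toReal)) *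
      ‖(heatKernel t ⋆ v) x‖ₑ ≤ eLpNorm v p volume := by
  have := HolderConjugate.inv_one_sub_inv' hp
  set γ : ℝ := finrank ℝ V / 2 * p⁻¹.toReal
  have hbound : ‖(heatKernel t ⋆ v) x‖ₑ ≤
      ENNReal.ofReal ((4 * Real.pi * t) ^ (-γ)) * eLpNorm v p volume :=
    (enorm_convolution_le_eLpNorm_mul_eLpNorm (p := (1 - p⁻¹)⁻¹)
      (continuous_heatKernel t).aestronglyMeasurable hv x).trans
      (by gcongr; exact eLpNorm_heatKernel_le ht _ p)
  calc ENNReal.ofReal ((4 * Real.pi * t) ^ γ) * ‖(heatKernel t ⋆ v) x‖ₑ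
      ≤ ENNReal.ofReal ((4 * Real.pi * t) ^ γ) *
          (ENNReal.ofReal ((4 * Real.pi * t) ^ (-γ)) * eLpNorm v p volume) := by gcongr
    _ = eLpNorm v p volume := by
      rw [← mul_assoc, ← ENNReal.ofReal_mul (by positivity), ← Real.rpow_add (by positivity),
        add_neg_cancel, Real.rpow_zero, ENNReal.ofReal_one, one_mul]

theorem ofReal_mul_enorm_heatKernel_two_mul_convolution_le {τ : ℝ} {r s : ℝ≥0∞} [CompleteSpace F]
    (hτ : 0 < τ) (hp : 1 ≤ p) (hr : r ≠ 0) (hs : 1 ≤ s) (hv : MemLp v p) (x : V) :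
    ENNReal.ofReal ((4 * Real.pi * τ) ^ (finrank ℝ V / 2 * s⁻¹.toReal) * τ ^ r⁻¹.toReal) *
        ‖(heatKernel (2 * τ) ⋆ v) x‖ₑ ≤
      eLpNorm (fun t => eLpNorm (heatKernel t ⋆ v) s volume) r (volume.restrict (Ioi 0)) := by
  have hlower : ∀ t ∈ Ioc 0 τ,
      ENNReal.ofReal ((4 * Real.pi * τ) ^ (finrank ℝ V / 2 * s⁻¹.toReal)) *
        ‖(heatKernel (2 * τ) ⋆ v) x‖ₑ ≤ ‖eLpNorm (heatKernel t ⋆ v) s volume‖ₑ := by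
    rintro t ⟨ht₀, htτ⟩
    have hτt : τ ≤ 2 * τ - t := by linarith
    have hsemigroup : (heatKernel (2 * τ) ⋆ v) x =
        (heatKernel (2 * τ - t) ⋆ (heatKernel t ⋆ v)) x := by
      rw [← heatKernel_add_convolution (hτ.trans_le hτt) ht₀ hp hv, sub_add_cancel]
    rw [hsemigroup, enorm_eq_self]
    exact le_trans (by gcongr) (ofReal_rpow_mul_enorm_heatKernel_convolution_le
      (hτ.trans_le hτt) hs (aestronglyMeasurable_convolution
        (continuous_heatKernel t).aestronglyMeasurable hv.1) x)
  have hvolume : volume.restrict (Ioi 0) (Ioc 0 τ) = ENNReal.ofReal τ := by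
    rw [Measure.restrict_apply measurableSet_Ioc, inter_eq_left.2 Ioc_subset_Ioi_self,
      Real.volume_Ioc, sub_zero]
  have h := mul_measure_rpow_le_eLpNorm (μ := volume.restrict (Ioi 0)) hr measurableSet_Ioc
    (by simpa [hvolume]) hlower
  rwa [hvolume, ENNReal.ofReal_rpow_of_pos hτ, mul_right_comm,
    ← ENNReal.ofReal_mul (by positivity)] at h

/-- The functional `v ↦ (e^{tΔ}v)(0)` on `L^p`, encoded as the duality pairing with the (even) heat
kernel in the conjugate space. -/
def heatEvalZero (V : Type*) [NormedAddCommGroup V] [InnerProductSpace ℝ V]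
    [FiniteDimensional ℝ V] [MeasurableSpace V] [BorelSpace V] (p : ℝ≥0∞) [hp : Fact (1 ≤ p)]
    {t : ℝ} (ht : 0 < t) : Lp ℝ p (volume : Measure V) →L[ℝ] ℝ :=
  have := HolderConjugate.inv_one_sub_inv' hp.out
  have hq : 1 ≤ (1 - p⁻¹)⁻¹ := HolderConjugate.one_le _ p
  have : Fact (1 ≤ (1 - p⁻¹)⁻¹) := ⟨hq⟩
  (ContinuousLinearMap.lsmul ℝ ℝ).lpPairing volume (1 - p⁻¹)⁻¹ p ((memLp_heatKernel ht hq).toLp _)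

variable [Fact (1 ≤ p)]

theorem heatEvalZero_apply (ht : 0 < t) (v : Lp ℝ p (volume : Measure V)) :
    heatEvalZero V p ht v = (heatKernel t ⋆ v) 0 := by
  have := HolderConjugate.inv_one_sub_inv' (Fact.out : 1 ≤ p)
  have hq : 1 ≤ (1 - p⁻¹)⁻¹ := HolderConjugate.one_le _ p
  have : Fact (1 ≤ (1 - p⁻¹)⁻¹) := ⟨hq⟩
  have hK := (memLp_heatKernel (V := V) ht hq).coeFn_toLp
  rw [heatEvalZero, ContinuousLinearMap.lpPairing_eq_integral, convolution_lsmul_swap]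
  refine integral_congr_ae ?_
  filter_upwards [hK] with x hx
  simp [hx, heatKernel_neg]

theorem le_norm_heatEvalZero (ht : 0 < t) :
    2 ^ (-(finrank ℝ V : ℝ) / 2) * (4 * Real.pi * t) ^ (-(finrank ℝ V / 2 * p⁻¹.toReal)) ≤
      ‖heatEvalZero V p ht‖ := by
  have hp : 1 ≤ p := Fact.out
  have := HolderConjugate.inv_one_sub_inv' hp
  set q := (1 - p⁻¹)⁻¹
  set n : ℝ := (finrank ℝ V : ℝ)
  have hexp : -(n / 2 * p⁻¹.toReal) + -(n / 2 * q⁻¹.toReal) = -n / 2 := by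
    linear_combination -(n / 2) * toReal_inv_add_toReal_inv_eq_one p q
  let K : Lp ℝ p (volume : Measure V) := (memLp_heatKernel ht hp).toLp _
  have hK : ‖K‖ ≤ (4 * Real.pi * t) ^ (-(n / 2 * q⁻¹.toReal)) := by
    rw [Lp.norm_toLp]
    exact ENNReal.toReal_le_of_le_ofReal (by positivity) (eLpNorm_heatKernel_le ht p q)
  have hevalK : heatEvalZero V p ht K = (4 * Real.pi * (t + t)) ^ (-n / 2) := by
    rw [heatEvalZero_apply, ← heatKernel_zero_right (V := V),
      ← heatKernel_convolution_heatKernel ht ht]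
    exact congr_fun (convolution_congr _ (ae_eq_refl _) (MemLp.coeFn_toLp _)) 0
  refine le_of_mul_le_mul_right ?_ (Real.rpow_pos_of_pos (by positivity : 0 < 4 * Real.pi * t)
    (-(n / 2 * q⁻¹.toReal)))
  calc 2 ^ (-n / 2) * (4 * Real.pi * t) ^ (-(n / 2 * p⁻¹.toReal)) *
        (4 * Real.pi * t) ^ (-(n / 2 * q⁻¹.toReal))
      = (4 * Real.pi * (t + t)) ^ (-n / 2) := by
        rw [mul_assoc, ← Real.rpow_add (by positivity), hexp,
          ← Real.mul_rpow (by positivity) (by positivity)]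
        ring_nf
    _ ≤ ‖heatEvalZero V p ht K‖ := hevalK ▸ le_abs_self _
    _ ≤ ‖heatEvalZero V p ht‖ * ‖K‖ := ContinuousLinearMap.le_opNorm _ K
    _ ≤ ‖heatEvalZero V p ht‖ * (4 * Real.pi * t) ^ (-(n / 2 * q⁻¹.toReal)) := by gcongr

theorem not_bddAbove_norm_smul_heatEvalZero {γ ρ : ℝ}
    (h : ρ + γ < finrank ℝ V / 2 * p⁻¹.toReal) :
    ¬BddAbove (range fun τ : Ioi (0 : ℝ) => ‖((4 * Real.pi * τ) ^ γ * (τ : ℝ) ^ ρ) •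
      heatEvalZero V p (mul_pos two_pos τ.2)‖) := by
  rintro ⟨M, hM⟩
  set α : ℝ := finrank ℝ V / 2 * p⁻¹.toReal
  set c : ℝ := (4 * Real.pi) ^ γ * 2 ^ (-(finrank ℝ V : ℝ) / 2) * (4 * Real.pi * 2) ^ (-α)
  have hc : 0 < c := by positivity
  have hbound : ∀ᶠ τ : ℝ in 𝓝[>] 0, c * τ ^ (ρ + γ - α) ≤ M := by
    filter_upwards [self_mem_nhdsWithin] with τ hτ
    have hτ₀ : 0 < τ := hτ
    calc c * τ ^ (ρ + γ - α)
        = ((4 * Real.pi * τ) ^ γ * τ ^ ρ) *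
          (2 ^ (-(finrank ℝ V : ℝ) / 2) * (4 * Real.pi * (2 * τ)) ^ (-α)) := by
          rw [← mul_assoc _ 2 τ, Real.mul_rpow (by positivity) hτ₀.le,
            Real.mul_rpow (by positivity) hτ₀.le, sub_eq_add_neg, Real.rpow_add hτ₀,
            Real.rpow_add hτ₀]
          ring
      _ ≤ ‖(4 * Real.pi * τ) ^ γ * τ ^ ρ‖ * ‖heatEvalZero V p (mul_pos two_pos hτ₀)‖ := by
          gcongr
          · exact Real.le_norm_self _
          · exact le_norm_heatEvalZero _
      _ = ‖((4 * Real.pi * τ) ^ γ * τ ^ ρ) • heatEvalZero V p (mul_pos two_pos hτ₀)‖ :=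
          (norm_smul _ _).symm
      _ ≤ M := hM (mem_range_self (⟨τ, hτ⟩ : Ioi (0 : ℝ)))
  have htop : Tendsto (fun τ : ℝ => c * τ ^ (ρ + γ - α)) (𝓝[>] 0) atTop :=
    (tendsto_rpow_neg_nhdsGT_zero (by linarith)).const_mul_atTop hc
  obtain ⟨τ, hgt, hle⟩ := ((htop.eventually_gt_atTop M).and hbound).exists
  exact hgt.not_ge hle

end heatKernel

theorem heat_eq_convolution (d : ℕ) (t : ℝ) (v : EuclideanSpace ℝ (Fin d) → ℝ) :
    heat d t v = heatKernel t ⋆ v := by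
  ext x
  simp [heat, heatKernel, convolution_lsmul_swap]

theorem mixedNormH_eq_eLpNorm {d : ℕ} {r s : ℝ≥0∞} (hr : r ≠ 0)
    (w : ℝ → EuclideanSpace ℝ (Fin d) → ℝ) :
    mixedNormH d r s w =
      eLpNorm (fun t => eLpNorm (w t) s volume) r (volume.restrict (Ioi 0)) := by
  unfold mixedNormH
  split_ifs with hr'
  · simp [hr', eLpNormEssSup]
  · simp [eLpNorm_eq_lintegral_rpow_enorm_toReal hr hr']

theorem ofReal_mul_enorm_heatEvalZero_le_mixedNormH {d : ℕ} {p r s : ℝ≥0∞} [Fact (1 ≤ p)] {τ : ℝ}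
    (hτ : 0 < τ) (hr : r ≠ 0) (hs : 1 ≤ s)
    (v : Lp ℝ p (volume : Measure (EuclideanSpace ℝ (Fin d)))) :
    ENNReal.ofReal ((4 * Real.pi * τ) ^ (d / 2 * s⁻¹.toReal) * τ ^ r⁻¹.toReal) *
        ‖heatEvalZero _ p (mul_pos two_pos hτ) v‖ₑ ≤
      mixedNormH d r s (fun t => heat d t v) := by
  simp only [mixedNormH_eq_eLpNorm hr, heat_eq_convolution]
  rw [heatEvalZero_apply]
  simpa only [finrank_euclideanSpace_fin] using
    ofReal_mul_enorm_heatKernel_two_mul_convolution_le hτ Fact.out hr hs (Lp.memLp v) 0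

section ScalingCondition

variable {d : ℕ} {p r s : ℝ≥0∞}

theorem ne_zero_of_two_div_add_div_lt (h : 2 / r + d / s < d / p) : r ≠ 0 := by
  rintro rfl
  rw [ENNReal.div_zero two_ne_zero, top_add] at h
  exact not_top_lt h

theorem lt_of_two_div_add_div_lt (h : 2 / r + d / s < d / p) : p < s :=
  lt_of_not_ge fun hsp => h.not_ge (le_add_left (ENNReal.div_le_div_left hsp _))

theorem toReal_inv_add_lt_of_two_div_add_div_lt (hp : p ≠ 0) (h : 2 / r + d / s < d / p) :
    r⁻¹.toReal + d / 2 * s⁻¹.toReal < d / 2 * p⁻¹.toReal := by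
  have h₀ := (ENNReal.toReal_lt_toReal h.ne_top (ENNReal.div_ne_top (by simp) hp)).2 h
  have h₁ := ENNReal.add_ne_top.1 h.ne_top
  rw [ENNReal.toReal_add h₁.1 h₁.2] at h₀
  simp only [div_eq_mul_inv, ENNReal.toReal_mul, ENNReal.toReal_natCast,
    ENNReal.toReal_ofNat] at h₀ ⊢
  linarith

end ScalingCondition

theorem stmt_16_general (d : ℕ) (p r s : ℝ≥0∞) [Fact (1 ≤ p)] (h : 2 / r + d / s < d / p) :
    IsMeagre {v : Lp ℝ p (volume : Measure (EuclideanSpace ℝ (Fin d))) |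
      mixedNormH d r s (fun t => heat d t ⇑v) < ∞} := by
  have hp : 1 ≤ p := Fact.out
  have hr := ne_zero_of_two_div_add_div_lt h
  have hs := hp.trans (lt_of_two_div_add_div_lt h).le
  have hexp := toReal_inv_add_lt_of_two_div_add_div_lt (one_pos.trans_le hp).ne' h
  rw [← finrank_euclideanSpace_fin (𝕜 := ℝ) (n := d)] at hexp
  refine (isMeagre_setOf_bddAbove_norm_apply (not_bddAbove_norm_smul_heatEvalZero hexp)).mono ?_
  refine fun v hv => ⟨(mixedNormH d r s fun t => heat d t v).toReal, forall_mem_range.2 fun τ => ?_⟩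
  have hτ : 0 < (τ : ℝ) := τ.2
  rw [← toReal_enorm]
  refine ENNReal.toReal_mono hv.ne (le_trans ?_
    (ofReal_mul_enorm_heatEvalZero_le_mixedNormH hτ hr hs v))
  rw [smul_apply, enorm_smul, Real.enorm_of_nonneg (by positivity), finrank_euclideanSpace_fin]

/-- If `2/r + d/s < d/2` then only a meagre set of `v ∈ L²(ℝ^d)` satisfies
`e^{tΔ} v ∈ L^r(0,∞;L^s)`. -/
theorem stmt_16 (d : ℕ) (hd : 1 ≤ d) (r s : ℝ≥0∞) (hr : 1 ≤ r) (hs : 1 ≤ s)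
    (h : 2/r + d/s < d/2) :
    IsMeagre {v : Lp ℝ 2 (volume : Measure (EuclideanSpace ℝ (Fin d))) |
      mixedNormH d r s (fun t => heat d t ⇑v) < ∞} :=
  stmt_16_general d 2 r s h

end
end
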